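/- arXiv:2103.14974 — 3 statements merged into one kernel-verified Lean document; each statement's English description precedes it below -/
import Mathlib

section
/- Let U ∈ ℝ^{m×r} and V ∈ ℝ^{n×r} have orthonormal columns (UᵀU = I_r, VᵀV = I_r), and define P(Z) = Z V Vᵀ + U Uᵀ Z (I_n − V Vᵀ). Then for every Z ∈ ℝ^{m×n} and every T = ΔU Vᵀ + U ΔVᵀ with Vᵀ ΔV = 0, the residual Z − P(Z) is Frobenius-orthogonal to T: ⟨Z − P(Z), T⟩ = 0. -/
open Matrix

/-! The residual factors as `Z - P Z = (1 - U Uᵀ) Z (1 - V Vᵀ)`, so it is killed by `Uᵀ` on the left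
and by `V` on the right. Moving the factors of a tangent vector `A Vᵀ + U Bᵀ` across the trace form
`⟨X, Y⟩ = tr (X Yᵀ)` brings `V` and `Uᵀ` next to the residual. -/

section TangentProj

variable {m n k l R : Type*} [Fintype m] [Fintype n] [Fintype k] [Fintype l] [DecidableEq n]
  [Ring R]

/-- For `U` and `V` with orthonormal columns, the orthogonal projection onto `{A Vᵀ + U Bᵀ}`. When
`k` and `l` have the same size, this is the tangent space at `U S Vᵀ` (`S` invertible) of the
manifold of fixed-rank matrices; allowing `k ≠ l` treats row and column spaces independently. -/
def tangentProj (U : Matrix m k R) (V : Matrix n l R) (Z : Matrix m n R) : Matrix m n R :=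
  Z * V * Vᵀ + U * Uᵀ * Z * (1 - V * Vᵀ)

theorem sub_tangentProj [DecidableEq m] (U : Matrix m k R) (V : Matrix n l R) (Z : Matrix m n R) :
    Z - tangentProj U V Z = (1 - U * Uᵀ) * Z * (1 - V * Vᵀ) := by
  simp only [tangentProj, Matrix.sub_mul, Matrix.mul_sub, Matrix.one_mul, Matrix.mul_one,
    Matrix.mul_assoc]
  abel

theorem transpose_mul_sub_tangentProj [DecidableEq k] {U : Matrix m k R} (hU : Uᵀ * U = 1)
    (V : Matrix n l R) (Z : Matrix m n R) : Uᵀ * (Z - tangentProj U V Z) = 0 := by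
  classical
  have hker : Uᵀ * (1 - U * Uᵀ) = 0 := by
    rw [Matrix.mul_sub, ← Matrix.mul_assoc, hU, Matrix.mul_one, Matrix.one_mul, sub_self]
  rw [sub_tangentProj, ← Matrix.mul_assoc, ← Matrix.mul_assoc, hker, Matrix.zero_mul,
    Matrix.zero_mul]

theorem sub_tangentProj_mul [DecidableEq l] (U : Matrix m k R) {V : Matrix n l R}
    (hV : Vᵀ * V = 1) (Z : Matrix m n R) : (Z - tangentProj U V Z) * V = 0 := by
  classical
  have hker : (1 - V * Vᵀ) * V = 0 := by
    rw [Matrix.sub_mul, Matrix.mul_assoc, hV, Matrix.mul_one, Matrix.one_mul, sub_self]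
  rw [sub_tangentProj, Matrix.mul_assoc, hker, Matrix.mul_zero]

end TangentProj

section Orthogonality

variable {m n k l R : Type*} [Fintype m] [Fintype n] [Fintype k] [Fintype l]

theorem trace_mul_transpose_add_eq_zero [CommSemiring R] {U : Matrix m k R} {V : Matrix n l R}
    {X : Matrix m n R} (hU : Uᵀ * X = 0) (hV : X * V = 0) (A : Matrix m l R) (B : Matrix n k R) :
    trace (X * (A * Vᵀ + U * Bᵀ)ᵀ) = 0 :=
  calc trace (X * (A * Vᵀ + U * Bᵀ)ᵀ)
      = trace (X * V * Aᵀ) + trace (X * B * Uᵀ) := by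
        simp only [transpose_add, transpose_mul, transpose_transpose, Matrix.mul_add, trace_add,
          Matrix.mul_assoc]
    _ = trace (X * V * Aᵀ) + trace (Uᵀ * X * B) := by
        rw [trace_mul_comm (X * B), Matrix.mul_assoc Uᵀ]
    _ = 0 := by
        rw [hV, hU, Matrix.zero_mul, Matrix.zero_mul, trace_zero, trace_zero, add_zero]

theorem stmt_4_general [DecidableEq n] [DecidableEq k] [DecidableEq l] [CommRing R]
    {U : Matrix m k R} {V : Matrix n l R} (hU : Uᵀ * U = 1) (hV : Vᵀ * V = 1)
    (Z : Matrix m n R) (A : Matrix m l R) (B : Matrix n k R) :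
    ∑ i, ∑ j, (Z - tangentProj U V Z) i j * (A * Vᵀ + U * Bᵀ) i j = 0 :=
  (sum_hadamard_eq _ _).trans <| trace_mul_transpose_add_eq_zero
    (transpose_mul_sub_tangentProj hU V Z) (sub_tangentProj_mul U hV Z) A B

end Orthogonality

/-- For `P Z = Z V Vᵀ + U Uᵀ Z (I - V Vᵀ)` with `U, V` having orthonormal columns:
`Z - P Z` is Frobenius-orthogonal to every tangent vector `T = ΔU Vᵀ + U ΔVᵀ`
with `Vᵀ ΔV = 0`. -/
theorem stmt_4 {m n r : ℕ}
    (U : Matrix (Fin m) (Fin r) ℝ) (V : Matrix (Fin n) (Fin r) ℝ)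
    (hU : Uᵀ * U = 1) (hV : Vᵀ * V = 1)
    (P : Matrix (Fin m) (Fin n) ℝ → Matrix (Fin m) (Fin n) ℝ)
    (hP : ∀ Z, P Z = Z * V * Vᵀ + U * Uᵀ * Z * (1 - V * Vᵀ)) :
    ∀ (Z : Matrix (Fin m) (Fin n) ℝ) (ΔU : Matrix (Fin m) (Fin r) ℝ)
      (ΔV : Matrix (Fin n) (Fin r) ℝ), Vᵀ * ΔV = 0 →
      ∑ i, ∑ j, (Z - P Z) i j * (ΔU * Vᵀ + U * ΔVᵀ) i j = 0 := by
  obtain rfl : P = tangentProj U V := funext hP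
  exact fun Z ΔU ΔV _ => stmt_4_general hU hV Z ΔU ΔV
end

section
/- Let d ≥ 2, ranks r₀ = r_d = 1 and r₁, …, r_{d−1} positive integers, and mode sizes n₁, …, n_d. Suppose the cores U_k[i_k] ∈ ℝ^{r_{k−1}×r_k} (k = 1, …, d−1) are left-orthogonal, i.e., Σ_{i_k} U_k[i_k]ᵀ U_k[i_k] = I_{r_k}, and the cores V_k[i_k] ∈ ℝ^{r_{k−1}×r_k} (k = 2, …, d) are right-orthogonal, i.e., Σ_{i_k} V_k[i_k] V_k[i_k]ᵀ = I_{r_{k−1}}. Let A_k[i_k], B_k[i_k] ∈ ℝ^{r_{k−1}×r_k} be delta cores satisfying the gauge conditions Σ_{i_k} U_k[i_k]ᵀ A_k[i_k] = 0 and Σ_{i_k} U_k[i_k]ᵀ B_k[i_k] = 0 for k = 1, …, d−1. Define tensors Y, Z ∈ ℝ^{n₁×…×n_d} by Y_{i₁…i_d} = Σ_{k=1}^d U₁[i₁]⋯U_{k−1}[i_{k−1}] A_k[i_k] V_{k+1}[i_{k+1}]⋯V_d[i_d] and Z_{i₁…i_d} = Σ_{k=1}^d U₁[i₁]⋯U_{k−1}[i_{k−1}]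 B_k[i_k] V_{k+1}[i_{k+1}]⋯V_d[i_d]. Then Σ_{i₁,…,i_d} Y_{i₁…i_d} Z_{i₁…i_d} = Σ_{k=1}^d Σ_{i_k} ⟨A_k[i_k], B_k[i_k]⟩, where ⟨·,·⟩ is the entrywise (Frobenius) inner product of matrices. -/
open Matrix

/-- `coreProd G a b` is the matrix product `G a * G (a+1) * ⋯ * G (b-1)` of a chain of
cores with compatible (dependent) sizes; it is the identity when `b = a` and junk
(zero) when `b < a`. -/
def coreProd {ι : ℕ → Type} [∀ k, Fintype (ι k)] [∀ k, DecidableEq (ι k)]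
    (G : ∀ k : ℕ, Matrix (ι k) (ι (k + 1)) ℝ) (a : ℕ) : (b : ℕ) → Matrix (ι a) (ι b) ℝ
  | 0 => if h : a = 0 then by subst h; exact 1 else 0
  | (b + 1) => if h : a = b + 1 then by subst h; exact 1 else coreProd G a b * G b

/-- Given TT cores `C k [i_k]` and a multi-index `i = (i_0, …, i_{d-1})`, `sel d C i`
is the induced chain of matrices `k ↦ C k [i_k]` (junk `0` for `k ≥ d`). -/
def sel (d : ℕ) {n r : ℕ → ℕ}
    (C : ∀ k : ℕ, Fin (n k) → Matrix (Fin (r k)) (Fin (r (k + 1))) ℝ)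
    (i : ∀ k : Fin d, Fin (n k)) (k : ℕ) : Matrix (Fin (r k)) (Fin (r (k + 1))) ℝ :=
  if h : k < d then C k (i ⟨k, h⟩) else 0

/-- The entry at multi-index `i` of the TT tangent tensor with left cores `U`, right
cores `V` and delta cores `D`:
`T_i = ∑_{k=0}^{d-1} U 0 [i_0] ⋯ U (k-1) [i_{k-1}] · D k [i_k] · V (k+1) [i_{k+1}] ⋯ V (d-1) [i_{d-1}]`,
the `1 × 1` matrix (`r 0 = r d = 1`) being identified with its (sum of) entries. -/
def tangentEntry (d : ℕ) {n r : ℕ → ℕ}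
    (U V D : ∀ k : ℕ, Fin (n k) → Matrix (Fin (r k)) (Fin (r (k + 1))) ℝ)
    (i : ∀ k : Fin d, Fin (n k)) : ℝ :=
  ∑ k ∈ Finset.range d, ∑ a, ∑ b,
    (coreProd (sel d U i) 0 k * sel d D i k * coreProd (sel d V i) (k + 1) d) a b

/-!
Reading a tensor from left to right, the partial tangent tensors satisfy
`T (m + 1) = T m * V m + L m * D m`, where `L m = U 0 * ⋯ * U (m - 1)` is the left interface. So
every contraction over the first `m + 1` modes is obtained from contractions over the first `m`
modes. Left-orthogonality and the gauge conditions give `∑ (L m)ᵀ * L m = 1` and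
`∑ (L m)ᵀ * T m = 0`, which kills both cross terms in the contraction of two tangent tensors;
right-orthogonality of `V m` preserves the trace of the first diagonal term, and the second one
contributes `∑ (A m)ᵀ * B m`.
-/

theorem sum_init_last {M : Type*} [AddCommMonoid M] {m : ℕ} {α : Fin (m + 1) → Type*}
    [∀ k, Fintype (α k)] (f : (∀ k : Fin m, α k.castSucc) → α (Fin.last m) → M) :
    ∑ i, f (Fin.init i) (i (Fin.last m)) = ∑ x, ∑ i, f i x := by
  rw [← Fintype.sum_prod_type', ← (Fin.snocEquiv α).sum_comp]
  simp [Fin.snocEquiv]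

section Overlap

variable {R : Type*} [CommSemiring R] {α a b p q : Type*}
  [Fintype α] [Fintype a] [Fintype b]

/-- The overlap `∑ i, (P i)ᵀ * Q i` of two families of matrices, that is, the product of the
transpose of the stacked `P i` with the stacked `Q i`. For a core, `overlap U U = 1` is
left-orthogonality and `overlap U D = 0` is the gauge condition. -/
def overlap (P : α → Matrix a p R) (Q : α → Matrix a q R) : Matrix p q R :=
  ∑ i, (P i)ᵀ * Q i

theorem overlap_zero_left (Q : α → Matrix a q R) : overlap (0 : α → Matrix a p R) Q = 0 := by
  simp [overlap]

theorem overlap_zero_right (P : α → Matrix a p R) : overlap P (0 : α → Matrix a q R) = 0 := by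
  simp [overlap]

theorem overlap_add_left (P P' : α → Matrix a p R) (Q : α → Matrix a q R) :
    overlap (P + P') Q = overlap P Q + overlap P' Q := by
  simp [overlap, Matrix.add_mul, Finset.sum_add_distrib]

theorem overlap_add_right (P : α → Matrix a p R) (Q Q' : α → Matrix a q R) :
    overlap P (Q + Q') = overlap P Q + overlap P Q' := by
  simp [overlap, Matrix.mul_add, Finset.sum_add_distrib]

theorem transpose_overlap (P : α → Matrix a p R) (Q : α → Matrix a q R) :
    (overlap P Q)ᵀ = overlap Q P := by
  simp [overlap, transpose_sum]

theorem trace_overlap [Fintype p] (P Q : α → Matrix a p R) :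
    trace (overlap P Q) = ∑ i, ∑ x, ∑ y, P i x y * Q i x y := by
  simp only [overlap, trace_sum]
  refine Finset.sum_congr rfl fun i _ ↦ ?_
  simp only [trace, diag_apply, mul_apply, transpose_apply]
  exact Finset.sum_comm

theorem trace_sum_transpose_mul_mul [DecidableEq a] {V : α → Matrix a b R}
    (hV : ∑ x, V x * (V x)ᵀ = 1) (G : Matrix a a R) :
    trace (∑ x, (V x)ᵀ * G * V x) = trace G := by
  calc trace (∑ x, (V x)ᵀ * G * V x) = trace (∑ x, V x * (V x)ᵀ * G) := by
        simp only [trace_sum]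
        exact Finset.sum_congr rfl fun x _ ↦ trace_mul_cycle (V x)ᵀ G (V x)
    _ = trace G := by rw [← Matrix.sum_mul, hV, Matrix.one_mul]

end Overlap

section Interfaces

variable {R : Type*} [CommSemiring R] {n ι : ℕ → Type*} [∀ k, Fintype (ι k)]

/-- Contracts a core `M` at mode `m` with a family `P` of matrices indexed by the first `m` modes,
giving the family `P (i₀, …, iₘ₋₁) * M iₘ` indexed by the first `m + 1` modes. -/
def appendCore {m : ℕ} {a p q : Type*} [Fintype p] (P : (∀ k : Fin m, n k) → Matrix a p R)
    (M : n m → Matrix p q R) (i : ∀ k : Fin (m + 1), n k) : Matrix a q R :=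
  P (fun k ↦ i k.castSucc) * M (i (Fin.last m))

theorem overlap_appendCore [∀ k, Fintype (n k)] {m : ℕ} {a p p' q q' : Type*} [Fintype a]
    [Fintype p] [Fintype p'] (P : (∀ k : Fin m, n k) → Matrix a p R) (M : n m → Matrix p q R)
    (Q : (∀ k : Fin m, n k) → Matrix a p' R) (N : n m → Matrix p' q' R) :
    overlap (appendCore P M) (appendCore Q N) = ∑ x, (M x)ᵀ * overlap P Q * N x :=
  calc overlap (appendCore P M) (appendCore Q N)
      = ∑ x, ∑ i, (P i * M x)ᵀ * (Q i * N x) :=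
        sum_init_last (α := fun k ↦ n k) fun i x ↦ (P i * M x)ᵀ * (Q i * N x)
    _ = ∑ x, (M x)ᵀ * overlap P Q * N x := by
        simp only [overlap, transpose_mul, Matrix.mul_sum, Matrix.sum_mul, Matrix.mul_assoc]

variable [∀ k, DecidableEq (ι k)]

/-- The left interface matrices `U 0 [i_0] * ⋯ * U (m - 1) [i_{m-1}]` of a tensor train. -/
def leftInterface (U : ∀ k, n k → Matrix (ι k) (ι (k + 1)) R) :
    (m : ℕ) → (∀ k : Fin m, n k) → Matrix (ι 0) (ι m) R
  | 0 => fun _ ↦ 1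
  | m + 1 => appendCore (leftInterface U m) (U m)

/-- The matrices `∑ k < m, U 0 [i_0] ⋯ U (k-1) [i_{k-1}] * D k [i_k] * V (k+1) [i_{k+1}] ⋯
V (m-1) [i_{m-1}]`, that is, the tangent tensor truncated to its first `m` modes. The last bond is
left open, which makes the truncations satisfy a recursion in `m`. -/
def tangentInterface (U V D : ∀ k, n k → Matrix (ι k) (ι (k + 1)) R) :
    (m : ℕ) → (∀ k : Fin m, n k) → Matrix (ι 0) (ι m) R
  | 0 => 0
  | m + 1 => appendCore (tangentInterface U V D m) (V m) + appendCore (leftInterface U m) (D m)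

variable [∀ k, Fintype (n k)] {U V A B D : ∀ k, n k → Matrix (ι k) (ι (k + 1)) R}

theorem overlap_leftInterface_self {m : ℕ} (hU : ∀ k < m, overlap (U k) (U k) = 1) :
    overlap (leftInterface U m) (leftInterface U m) = 1 := by
  induction m with
  | zero => simp [overlap, leftInterface]
  | succ m ih =>
    rw [leftInterface, overlap_appendCore, ih fun k hk ↦ hU k (by lia)]
    simpa only [overlap, Matrix.mul_one] using hU m m.lt_succ_self

theorem overlap_leftInterface_tangentInterface {m : ℕ}
    (hU : ∀ k < m, overlap (U k) (U k) = 1) (hD : ∀ k < m, overlap (U k) (D k) = 0) :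
    overlap (leftInterface U m) (tangentInterface U V D m) = 0 := by
  induction m with
  | zero => exact overlap_zero_right _
  | succ m ih =>
    have hU' : ∀ k < m, overlap (U k) (U k) = 1 := fun k hk ↦ hU k (by lia)
    have hD' : ∀ k < m, overlap (U k) (D k) = 0 := fun k hk ↦ hD k (by lia)
    rw [leftInterface, tangentInterface, overlap_add_right, overlap_appendCore,
      overlap_appendCore, ih hU' hD', overlap_leftInterface_self hU']
    simpa only [Matrix.mul_zero, Matrix.zero_mul, Finset.sum_const_zero, zero_add,
      Matrix.mul_one, overlap] using hD m m.lt_succ_self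

theorem overlap_tangentInterface_succ {m : ℕ} (hU : ∀ k < m, overlap (U k) (U k) = 1)
    (hA : ∀ k < m, overlap (U k) (A k) = 0) (hB : ∀ k < m, overlap (U k) (B k) = 0) :
    overlap (tangentInterface U V A (m + 1)) (tangentInterface U V B (m + 1)) =
      ∑ x, (V m x)ᵀ * overlap (tangentInterface U V A m) (tangentInterface U V B m) * V m x +
        overlap (A m) (B m) := by
  have hLA : overlap (tangentInterface U V A m) (leftInterface U m) = 0 := by
    rw [← transpose_overlap, overlap_leftInterface_tangentInterface hU hA, transpose_zero]
  have hLB := overlap_leftInterface_tangentInterface (V := V) hU hB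
  simp only [tangentInterface, overlap_add_left, overlap_add_right, overlap_appendCore, hLA, hLB,
    overlap_leftInterface_self hU, Matrix.mul_zero, Matrix.zero_mul, Matrix.mul_one,
    Finset.sum_const_zero, add_zero, zero_add]
  rfl

theorem stmt_14_general {d : ℕ} (hU : ∀ k, k + 1 < d → overlap (U k) (U k) = 1)
    (hV : ∀ k, 1 ≤ k → k < d → ∑ x, V k x * (V k x)ᵀ = 1)
    (hA : ∀ k, k + 1 < d → overlap (U k) (A k) = 0)
    (hB : ∀ k, k + 1 < d → overlap (U k) (B k) = 0) :
    trace (overlap (tangentInterface U V A d) (tangentInterface U V B d)) =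
      ∑ k ∈ Finset.range d, trace (overlap (A k) (B k)) := by
  induction d with
  | zero => simp [tangentInterface, overlap_zero_left]
  | succ m ih =>
    have trace_conj_eq :
        trace (∑ x, (V m x)ᵀ *
          overlap (tangentInterface U V A m) (tangentInterface U V B m) * V m x) =
        trace (overlap (tangentInterface U V A m) (tangentInterface U V B m)) := by
      rcases m.eq_zero_or_pos with rfl | hm
      · simp [tangentInterface, overlap_zero_left]
      · exact trace_sum_transpose_mul_mul (hV m hm m.lt_succ_self) _
    rw [overlap_tangentInterface_succ (fun k hk ↦ hU k (by lia)) (fun k hk ↦ hA k (by lia))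
      (fun k hk ↦ hB k (by lia)), trace_add, trace_conj_eq, Finset.sum_range_succ,
      ih (fun k hk ↦ hU k (by lia)) (fun k hk hkm ↦ hV k hk (by lia))
        (fun k hk ↦ hA k (by lia)) (fun k hk ↦ hB k (by lia))]

end Interfaces

section CoreProd

variable {ι : ℕ → Type} [∀ k, Fintype (ι k)] [∀ k, DecidableEq (ι k)]
  (G : ∀ k : ℕ, Matrix (ι k) (ι (k + 1)) ℝ)

theorem coreProd_self (a : ℕ) : coreProd G a a = 1 := by
  cases a <;> simp [coreProd]

theorem coreProd_succ_of_le {a b : ℕ} (h : a ≤ b) :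
    coreProd G a (b + 1) = coreProd G a b * G b := by
  simp [coreProd, show a ≠ b + 1 by lia]

end CoreProd

section TangentEntry

variable {d : ℕ} {n r : ℕ → ℕ}
  (U V D : ∀ k : ℕ, Fin (n k) → Matrix (Fin (r k)) (Fin (r (k + 1))) ℝ)
  (i : ∀ k : Fin d, Fin (n k))

theorem sel_of_lt {k : ℕ} (hk : k < d) : sel d U i k = U k (i ⟨k, hk⟩) :=
  dif_pos hk

theorem coreProd_sel_eq_leftInterface {m : ℕ} (hm : m ≤ d) :
    coreProd (sel d U i) 0 m = leftInterface U m (Fin.take m hm i) := by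
  induction m with
  | zero => exact coreProd_self _ 0
  | succ m ih =>
    rw [coreProd_succ_of_le _ m.zero_le, ih (by lia), sel_of_lt U i hm]
    rfl

theorem sum_coreProd_sel_eq_tangentInterface {m : ℕ} (hm : m ≤ d) :
    ∑ k ∈ Finset.range m,
        coreProd (sel d U i) 0 k * sel d D i k * coreProd (sel d V i) (k + 1) m =
      tangentInterface U V D m (Fin.take m hm i) := by
  induction m with
  | zero => rfl
  | succ m ih =>
    have coreProd_V_succ : ∀ k ∈ Finset.range m,
        coreProd (sel d U i) 0 k * sel d D i k * coreProd (sel d V i) (k + 1) (m + 1) =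
          coreProd (sel d U i) 0 k * sel d D i k * coreProd (sel d V i) (k + 1) m *
            sel d V i m := fun k hk ↦ by
      rw [coreProd_succ_of_le _ (Finset.mem_range.mp hk), ← Matrix.mul_assoc]
    rw [Finset.sum_range_succ, Finset.sum_congr rfl coreProd_V_succ, ← Matrix.sum_mul,
      ih (by lia), coreProd_self, Matrix.mul_one, coreProd_sel_eq_leftInterface U i (by lia),
      sel_of_lt V i hm, sel_of_lt D i hm]
    rfl

theorem tangentEntry_eq_sum_tangentInterface :
    tangentEntry d U V D i = ∑ a, ∑ b, tangentInterface U V D d i a b := by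
  have h := sum_coreProd_sel_eq_tangentInterface U V D i le_rfl
  rw [Fin.take_eq_self] at h
  simp only [tangentEntry, ← h, Matrix.sum_apply]
  rw [Finset.sum_comm]
  exact Finset.sum_congr rfl fun a _ ↦ Finset.sum_comm

end TangentEntry

/-- For TT tangent tensors `Y`, `Z` given by delta cores `A`, `B` (with left-orthogonal
cores `U`, right-orthogonal cores `V`, and gauge conditions on `A` and `B`), the inner
product is the sum of the inner products of the delta cores:
`⟨Y, Z⟩ = ∑_{k} ∑_{i_k} ⟨A k [i_k], B k [i_k]⟩`. Cores are indexed from `0` rather than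
from `1` as in the paper, so e.g. left-orthogonality is required for `k < d - 1`. -/
theorem stmt_14 (d : ℕ) (hd : 2 ≤ d) (n r : ℕ → ℕ) (hr0 : r 0 = 1) (hrd : r d = 1)
    (U V A B : ∀ k : ℕ, Fin (n k) → Matrix (Fin (r k)) (Fin (r (k + 1))) ℝ)
    (hU : ∀ k, k < d - 1 → ∑ ik, (U k ik)ᵀ * U k ik = 1)
    (hV : ∀ k, 1 ≤ k → k < d → ∑ ik, V k ik * (V k ik)ᵀ = 1)
    (hA : ∀ k, k < d - 1 → ∑ ik, (U k ik)ᵀ * A k ik = 0)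
    (hB : ∀ k, k < d - 1 → ∑ ik, (U k ik)ᵀ * B k ik = 0) :
    ∑ i : ∀ k : Fin d, Fin (n k), tangentEntry d U V A i * tangentEntry d U V B i
      = ∑ k ∈ Finset.range d, ∑ ik : Fin (n k), ∑ a, ∑ b, A k ik a b * B k ik a b := by
  have : Unique (Fin (r 0)) := (finCongr hr0).unique
  have : Unique (Fin (r d)) := (finCongr hrd).unique
  calc ∑ i, tangentEntry d U V A i * tangentEntry d U V B i
      = trace (overlap (tangentInterface U V A d) (tangentInterface U V B d)) := by
        simp only [tangentEntry_eq_sum_tangentInterface, trace_overlap, Fintype.sum_unique]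
    _ = ∑ k ∈ Finset.range d, trace (overlap (A k) (B k)) :=
        stmt_14_general (fun k hk ↦ hU k (by lia)) hV (fun k hk ↦ hA k (by lia))
          (fun k hk ↦ hB k (by lia))
    _ = _ := by simp only [trace_overlap]
end

section
/- Let E be a finite-dimensional real inner product space and A : E → E a self-adjoint linear map, and let f(x) = ⟨A x, x⟩ / ⟨x, x⟩ for x ≠ 0. Then for every x ≠ 0 and every z ∈ E, the Euclidean Hessian of f at x applied to z satisfies ∇²f(x) z = (2/⟨x,x⟩) A z − 2 (f(x)/⟨x,x⟩) z − 4 (⟨A x, z⟩/⟨x,x⟩²) x − 4 (⟨x, z⟩/⟨x,x⟩²) A x + 8 f(x) (⟨x, z⟩/⟨x,x⟩²) x, where ∇²f(x) z is the element of E satisfying ⟨∇²f(x) z, h⟩ = D²f(x)[z, h] for all h ∈ E. -/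
open scoped RealInnerProductSpace

/-!
Away from `0` the gradient of the Rayleigh quotient `R` is `g y = (2 / ‖y‖²) (T y - R y • y)`.
By the product rule, the derivative of `g` at `x` in direction `z` is
`(2 / ‖x‖²) (T z - R x • z - ⟪g x, z⟫ x) - (4 ⟪x, z⟫ / ‖x‖⁴) (T x - R x • x)`, and the last term
is `(2 / ‖x‖²) ⟪x, z⟫ g x`. So the Hessian is `2 / ‖x‖²` times `T - R x` minus the symmetric pair
of rank-one operators `x ⊗ g x + g x ⊗ x`.
-/

section

open Filter InnerProductSpace Topology

variable {E : Type*} [NormedAddCommGroup E] [InnerProductSpace ℝ E]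

theorem hasFDerivAt_fderiv_of_eventually_hasFDerivAt_innerSL {f : E → ℝ} {g : E → E}
    {g' : E →L[ℝ] E} {x : E} (hf : ∀ᶠ y in 𝓝 x, HasFDerivAt f (innerSL ℝ (g y)) y)
    (hg : HasFDerivAt g g' x) :
    HasFDerivAt (fderiv ℝ f) ((innerSL ℝ).comp g') x :=
  ((innerSL ℝ (E := E)).hasFDerivAt.comp x hg).congr_of_eventuallyEq
    (hf.mono fun _ hy => hy.fderiv)

theorem hasFDerivAt_inv_norm_sq {x : E} (hx : x ≠ 0) :
    HasFDerivAt (fun y : E => (‖y‖ ^ 2)⁻¹) (-(2 / ‖x‖ ^ 4) • innerSL ℝ x) x := by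
  have hinv : HasDerivAt (fun t : ℝ => t⁻¹) (-((‖x‖ ^ 2) ^ 2)⁻¹) (‖x‖ ^ 2) :=
    hasDerivAt_inv (pow_ne_zero 2 (norm_ne_zero_iff.mpr hx))
  refine (hinv.comp_hasFDerivAt x (hasStrictFDerivAt_norm_sq x).hasFDerivAt).congr_fderiv ?_
  ext z
  simp only [smul_apply, smul_eq_mul, nsmul_eq_mul]
  ring

/-- The gradient of the Rayleigh quotient of a symmetric operator `T` at a point `x ≠ 0`, given
by its closed formula because Mathlib's `gradient` is only defined on complete spaces. -/
noncomputable def rayleighGradient (T : E →L[ℝ] E) (x : E) : E :=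
  (2 / ‖x‖ ^ 2) • (T x - T.rayleighQuotient x • x)

/-- The Hessian operator of the Rayleigh quotient of a symmetric operator `T` at a point `x ≠ 0`:
the derivative of `rayleighGradient T`, in the form that displays its symmetry. -/
noncomputable def rayleighHessian (T : E →L[ℝ] E) (x : E) : E →L[ℝ] E :=
  (2 / ‖x‖ ^ 2) • (T - T.rayleighQuotient x • ContinuousLinearMap.id ℝ E
    - rankOne ℝ x (rayleighGradient T x) - rankOne ℝ (rayleighGradient T x) x)

variable {T : E →L[ℝ] E} {x : E}

theorem hasFDerivAt_rayleighQuotient (hT : (T : E →ₗ[ℝ] E).IsSymmetric) (hx : x ≠ 0) :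
    HasFDerivAt T.rayleighQuotient (innerSL ℝ (rayleighGradient T x)) x := by
  have hnum : HasFDerivAt T.reApplyInnerSelf (2 • innerSL ℝ (T x)) x :=
    (hT.hasStrictFDerivAt_reApplyInnerSelf x).hasFDerivAt
  refine (hnum.fun_mul (hasFDerivAt_inv_norm_sq hx)).congr_fderiv ?_
  ext z
  simp only [rayleighGradient, ContinuousLinearMap.rayleighQuotient, add_apply, smul_apply,
    innerSL_apply_apply, inner_smul_left, inner_sub_left, smul_eq_mul, nsmul_eq_mul,
    conj_trivial]
  ring

theorem hasFDerivAt_rayleighGradient (hT : (T : E →ₗ[ℝ] E).IsSymmetric) (hx : x ≠ 0) :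
    HasFDerivAt (rayleighGradient T) (rayleighHessian T x) x := by
  have hcoeff : HasFDerivAt (fun y : E => 2 / ‖y‖ ^ 2) (-(4 / ‖x‖ ^ 4) • innerSL ℝ x) x := by
    refine ((hasFDerivAt_inv_norm_sq hx).const_mul 2).congr_fderiv ?_
    module
  have hresidual : HasFDerivAt (fun y => T y - T.rayleighQuotient y • y)
      (T - (T.rayleighQuotient x • ContinuousLinearMap.id ℝ E
        + (innerSL ℝ (rayleighGradient T x)).smulRight x)) x :=
    T.hasFDerivAt.fun_sub ((hasFDerivAt_rayleighQuotient hT hx).fun_smul (hasFDerivAt_id x))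
  refine (hcoeff.fun_smul hresidual).congr_fderiv ?_
  ext z
  simp only [rayleighHessian, rankOne_apply, add_apply, sub_apply, smul_apply,
    ContinuousLinearMap.smulRight_apply, innerSL_apply_apply, ContinuousLinearMap.id_apply]
  rw [rayleighGradient]
  module

theorem hasFDerivAt_fderiv_rayleighQuotient (hT : (T : E →ₗ[ℝ] E).IsSymmetric) (hx : x ≠ 0) :
    HasFDerivAt (fderiv ℝ T.rayleighQuotient) ((innerSL ℝ).comp (rayleighHessian T x)) x :=
  hasFDerivAt_fderiv_of_eventually_hasFDerivAt_innerSL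
    ((eventually_ne_nhds hx).mono fun _ => hasFDerivAt_rayleighQuotient hT)
    (hasFDerivAt_rayleighGradient hT hx)

theorem rayleighHessian_apply (T : E →L[ℝ] E) (x z : E) :
    rayleighHessian T x z =
      (2 / ⟪x, x⟫) • T z - (2 * (T.rayleighQuotient x / ⟪x, x⟫)) • z
        - (4 * (⟪T x, z⟫ / ⟪x, x⟫ ^ 2)) • x
        - (4 * (⟪x, z⟫ / ⟪x, x⟫ ^ 2)) • T x
        + (8 * T.rayleighQuotient x * (⟪x, z⟫ / ⟪x, x⟫ ^ 2)) • x := by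
  simp only [rayleighHessian, rayleighGradient, smul_apply, sub_apply, rankOne_apply,
    ContinuousLinearMap.id_apply, inner_smul_left, inner_sub_left, conj_trivial,
    real_inner_self_eq_norm_sq]
  module

end

theorem stmt_16_general {E : Type*} [NormedAddCommGroup E] [InnerProductSpace ℝ E]
    (A : E →L[ℝ] E) (hA : (A : E →ₗ[ℝ] E).IsSymmetric)
    (f : E → ℝ) (hf : ∀ x, f x = ⟪A x, x⟫ / ⟪x, x⟫)
    (x : E) (hx : x ≠ 0) (z : E) (H : E)
    (hH : ∀ h : E, ⟪H, h⟫ = fderiv ℝ (fderiv ℝ f) x z h) :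
    H = (2 / ⟪x, x⟫) • A z - (2 * (f x / ⟪x, x⟫)) • z
        - (4 * (⟪A x, z⟫ / ⟪x, x⟫ ^ 2)) • x
        - (4 * (⟪x, z⟫ / ⟪x, x⟫ ^ 2)) • A x
        + (8 * f x * (⟪x, z⟫ / ⟪x, x⟫ ^ 2)) • x := by
  obtain rfl : f = A.rayleighQuotient := funext fun y => by
    rw [hf, ContinuousLinearMap.rayleighQuotient, A.reApplyInnerSelf_apply,
      real_inner_self_eq_norm_sq, RCLike.re_to_real]
  rw [← rayleighHessian_apply]
  refine ext_inner_right ℝ fun h => ?_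
  rw [hH, (hasFDerivAt_fderiv_rayleighQuotient hA hx).fderiv]
  exact innerSL_apply_apply ℝ _ _

/-- Let `E` be a finite-dimensional real inner product space, `A : E → E` a
self-adjoint linear map and `f(x) = ⟨A x, x⟩ / ⟨x, x⟩` the Rayleigh quotient. For
`x ≠ 0` and `z ∈ E`, the Euclidean Hessian of `f` at `x` applied to `z` (i.e. the
element `H ∈ E` with `⟨H, h⟩ = D²f(x)[z, h]` for all `h`) satisfies
`∇²f(x) z = (2/⟨x,x⟩) A z − 2 (f(x)/⟨x,x⟩) z − 4 (⟨A x, z⟩/⟨x,x⟩²) x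
  − 4 (⟨x, z⟩/⟨x,x⟩²) A x + 8 f(x) (⟨x, z⟩/⟨x,x⟩²) x`. -/
theorem stmt_16 {E : Type*} [NormedAddCommGroup E] [InnerProductSpace ℝ E]
    [FiniteDimensional ℝ E]
    (A : E →ₗ[ℝ] E) (hA : ∀ x y : E, ⟪A x, y⟫ = ⟪x, A y⟫)
    (f : E → ℝ) (hf : ∀ x, f x = ⟪A x, x⟫ / ⟪x, x⟫)
    (x : E) (hx : x ≠ 0) (z : E) (H : E)
    (hH : ∀ h : E, ⟪H, h⟫ = fderiv ℝ (fderiv ℝ f) x z h) :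
    H = (2 / ⟪x, x⟫) • A z - (2 * (f x / ⟪x, x⟫)) • z
        - (4 * (⟪A x, z⟫ / ⟪x, x⟫ ^ 2)) • x
        - (4 * (⟪x, z⟫ / ⟪x, x⟫ ^ 2)) • A x
        + (8 * f x * (⟪x, z⟫ / ⟪x, x⟫ ^ 2)) • x :=
  stmt_16_general (LinearMap.toContinuousLinearMap A) hA f hf x hx z H hH
end
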